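/- arXiv:2102.06889 — 2 statements merged into one kernel-verified Lean document; each statement's English description precedes it below -/
import Mathlib

section
/- For every VASS game A, every configuration pv, and every counter c: sup_π inf_σ len(Comp^{σ,π}(pv)) = inf_σ sup_π len(Comp^{σ,π}(pv)), and sup_π inf_σ max_c(Comp^{σ,π}(pv)) = inf_σ sup_π max_c(Comp^{σ,π}(pv)), where σ ranges over all Angel strategies and π over all Demon strategies, and both sides are evaluated in ℕ∞. -/
/-!
For a fixed `m : ℕ`, the condition `payoff > m` holds for a computation exactly when one of its
finite prefixes belongs to a fixed set `T`, for both payoffs (length and maximal counter value).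
So forcing `payoff > m` is, for Demon, a reachability game on finite computations, and such games are
determined (`reach_determined`): let `Attr T k` be the set of finite computations from which Demon
forces a visit to `T` in at most `k` steps. Inside `⋃ k, Attr T k`, Demon plays so that the rank
decreases at every step. Outside of it, Angel can always stay outside, because there are only
finitely many transitions and hence finitely many ranks to bound.

Determinacy at every threshold `m` yields the equality of the two values (`minimax`): if
`m < inf sup`, then no Angel strategy keeps the payoff `≤ m`, so some Demon strategy guarantees
payoff `≥ m + 1`, whence `m < sup inf`.
-/

open scoped Classical

namespace VassPaper

noncomputable section

/-- A `d`-dimensional VASS (game): a finite nonempty set of control states together with a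
finite set of transitions, where states are partitioned into angelic and demonic ones
(via the predicate `angelic`; demonic states are those that are not angelic). -/
structure VASS (d : ℕ) where
  Q : Type
  [finQ : Fintype Q]
  [neQ : Nonempty Q]
  Tran : Finset (Q × (Fin d → ℤ) × Q)
  angelic : Q → Prop

attribute [instance] VASS.finQ VASS.neQ

variable {d : ℕ}

/-- Every control state has at least one outgoing transition. -/
def VASS.total (V : VASS d) : Prop := ∀ q : V.Q, ∃ u p, (q, u, p) ∈ V.Tran

/-- A demonic VASS: all states are demonic. -/
def VASS.demonic (V : VASS d) : Prop := ∀ q : V.Q, ¬ V.angelic q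

/-- A configuration: a control state together with a vector of counter values. -/
abbrev VASS.Config (V : VASS d) : Type := V.Q × (Fin d → ℕ)

/-- A transition is enabled in a configuration if it is a transition of the VASS, starts in the
current control state, and does not make any counter negative. -/
def VASS.enabled (V : VASS d) (c : V.Config) (t : V.Q × (Fin d → ℤ) × V.Q) : Prop :=
  t ∈ V.Tran ∧ t.1 = c.1 ∧ ∀ i, 0 ≤ (c.2 i : ℤ) + t.2.1 i

/-- The configuration resulting from taking transition `t` in configuration `c`. -/
def VASS.applyT (V : VASS d) (c : V.Config) (t : V.Q × (Fin d → ℤ) × V.Q) : V.Config :=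
  (t.2.2, fun i => ((c.2 i : ℤ) + t.2.1 i).toNat)

/-- A strategy for the player owning the states in `own`: it assigns to every finite computation
(represented by its strict past `h` and current configuration `c`) an outgoing transition of the
current control state; the chosen transition must be enabled whenever some enabled transition
exists. -/
structure Strategy (V : VASS d) (own : V.Q → Prop) where
  choose : List V.Config → V.Config → V.Q × (Fin d → ℤ) × V.Q
  choose_mem : ∀ h c, own c.1 → (∃ t ∈ V.Tran, t.1 = c.1) →
    choose h c ∈ V.Tran ∧ (choose h c).1 = c.1
  choose_enabled : ∀ h c, own c.1 → (∃ t, V.enabled c t) → V.enabled c (choose h c)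

abbrev AngelStrategy (V : VASS d) := Strategy V V.angelic
abbrev DemonStrategy (V : VASS d) := Strategy V (fun q => ¬ V.angelic q)

/-- The maximal computation determined by the pair of strategies `(σ, π)` and the initial
configuration `init`: `playAux σ π init n` is (the history together with) the `n`-th
configuration of the computation, or `none` if the computation has already ended. -/
def playAux {V : VASS d} (σ : AngelStrategy V) (π : DemonStrategy V) (init : V.Config) :
    ℕ → Option (List V.Config × V.Config)
  | 0 => some ([], init)
  | n+1 => (playAux σ π init n).bind fun hc =>
      let t := if V.angelic hc.2.1 then σ.choose hc.1 hc.2 else π.choose hc.1 hc.2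
      if V.enabled hc.2 t then some (hc.1 ++ [hc.2], V.applyT hc.2 t) else none

/-- `c` is visited by the maximal computation `Comp^{σ,π}(init)`. -/
def visits {V : VASS d} (σ : AngelStrategy V) (π : DemonStrategy V) (init : V.Config)
    (c : V.Config) : Prop := ∃ n h, playAux σ π init n = some (h, c)

/-- The length of the maximal computation `Comp^{σ,π}(init)` (number of configurations),
as an extended natural number. -/
def lenComp {V : VASS d} (σ : AngelStrategy V) (π : DemonStrategy V) (init : V.Config) : ℕ∞ :=
  ⨆ n ∈ {n : ℕ | (playAux σ π init n).isSome}, ((n : ℕ∞) + 1)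

/-- The supremum of the values of counter `i` along the maximal computation
`Comp^{σ,π}(init)`. -/
def maxCounter {V : VASS d} (σ : AngelStrategy V) (π : DemonStrategy V) (init : V.Config)
    (i : Fin d) : ℕ∞ :=
  ⨆ c ∈ {c : V.Config | visits σ π init c}, (c.2 i : ℕ∞)

/-- `Tval(pv) = inf_σ sup_π len(Comp^{σ,π}(pv))`. -/
def Tval (V : VASS d) (init : V.Config) : ℕ∞ :=
  ⨅ σ : AngelStrategy V, ⨆ π : DemonStrategy V, lenComp σ π init

/-- `Cval[c](pv) = inf_σ sup_π max_c(Comp^{σ,π}(pv))`. -/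
def Cval (V : VASS d) (i : Fin d) (init : V.Config) : ℕ∞ :=
  ⨅ σ : AngelStrategy V, ⨆ π : DemonStrategy V, maxCounter σ π init i

/-- Termination complexity: `L(n) = max_{p ∈ Q} Tval(p n⃗)`. -/
def Lcomp (V : VASS d) : ℕ → ℕ∞ := fun n => ⨆ p : V.Q, Tval V (p, fun _ => n)

/-- Counter complexity: `C[c](n) = max_{p ∈ Q} Cval[c](p n⃗)`. -/
def Ccomp (V : VASS d) (i : Fin d) : ℕ → ℕ∞ := fun n => ⨆ p : V.Q, Cval V i (p, fun _ => n)

/-- `f ∈ O(g)`: `f n ≤ C · g n` for some constant `C` and all sufficiently large `n`. -/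
def BigO (f : ℕ → ℕ∞) (g : ℕ → ℕ) : Prop := ∃ C N : ℕ, ∀ n ≥ N, f n ≤ ((C * g n : ℕ) : ℕ∞)

/-- `f ∈ Ω(g)`: `f n ≥ g n / c` (i.e. `g n ≤ c · f n`) for some constant `c > 0` and all
sufficiently large `n`. -/
def BigOmega (f : ℕ → ℕ∞) (g : ℕ → ℕ) : Prop :=
  ∃ c N : ℕ, 0 < c ∧ ∀ n ≥ N, (g n : ℕ∞) ≤ (c : ℕ∞) * f n

/-- `f ∈ Θ(g) = O(g) ∩ Ω(g)`. -/
def BigTheta (f : ℕ → ℕ∞) (g : ℕ → ℕ) : Prop := BigO f g ∧ BigOmega f g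

/-- `f ∈ 2^{Ω(n)}`: `f n ≥ 2^{εn}` for some `ε > 0` (taken of the form `1/c`) and all
sufficiently large `n`. -/
def ExpOmega (f : ℕ → ℕ∞) : Prop :=
  ∃ c N : ℕ, 0 < c ∧ ∀ n ≥ N, ((2 ^ (n / c) : ℕ) : ℕ∞) ≤ f n

/-- `S ∈ 2^{O(n)}`: `S n ≤ 2^{Cn}` for some constant `C` and all sufficiently large `n`. -/
def ExpO (S : ℕ → ℕ) : Prop := ∃ C N : ℕ, ∀ n ≥ N, S n ≤ 2 ^ (C * n)


/-- A finite computation, as its strict past together with its current configuration. -/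
abbrev Pos (V : VASS d) : Type := List V.Config × V.Config

/-- The prolongation of a finite computation by the transition `t`. -/
def Pos.next {V : VASS d} (p : Pos V) (t : V.Q × (Fin d → ℤ) × V.Q) : Pos V :=
  (p.1 ++ [p.2], V.applyT p.2 t)

/-- The attractor of `T` of rank `k`: the finite computations from which Demon can force a visit
to `T` within `k` steps. -/
def Attr {V : VASS d} (T : Pos V → Prop) : ℕ → Pos V → Prop
  | 0, p => T p
  | k + 1, p => Attr T k p ∨
      (¬ V.angelic p.2.1 ∧ ∃ t, V.enabled p.2 t ∧ Attr T k (p.next t)) ∨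
      (V.angelic p.2.1 ∧ (∃ t, V.enabled p.2 t) ∧ ∀ t, V.enabled p.2 t → Attr T k (p.next t))

theorem Attr.mono {V : VASS d} {T : Pos V → Prop} {k l : ℕ} (hkl : k ≤ l) {p : Pos V}
    (h : Attr T k p) : Attr T l p := by
  induction hkl with
  | refl => exact h
  | step _ ih => exact Or.inl ih

/-- Any preference of transitions, given per finite computation, is realised by a strategy: it
takes a preferred enabled transition whenever there is one. -/
theorem exists_strategy (V : VASS d) (own : V.Q → Prop)
    (good : Pos V → V.Q × (Fin d → ℤ) × V.Q → Prop) :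
    ∃ s : Strategy V own, ∀ p : Pos V, (∃ t, V.enabled p.2 t) →
      V.enabled p.2 (s.choose p.1 p.2) ∧
      ((∃ t, V.enabled p.2 t ∧ good p t) → good p (s.choose p.1 p.2)) := by
  have key : ∀ p : Pos V, ∃ t : V.Q × (Fin d → ℤ) × V.Q,
      ((∃ t ∈ V.Tran, t.1 = p.2.1) → t ∈ V.Tran ∧ t.1 = p.2.1) ∧
      ((∃ t, V.enabled p.2 t) → V.enabled p.2 t) ∧
      ((∃ t, V.enabled p.2 t ∧ good p t) → good p t) := by
    intro p
    by_cases h1 : ∃ t, V.enabled p.2 t ∧ good p t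
    · obtain ⟨t, ht, hg⟩ := h1
      exact ⟨t, fun _ => ⟨ht.1, ht.2.1⟩, fun _ => ht, fun _ => hg⟩
    by_cases h2 : ∃ t, V.enabled p.2 t
    · obtain ⟨t, ht⟩ := h2
      exact ⟨t, fun _ => ⟨ht.1, ht.2.1⟩, fun _ => ht, fun h => absurd h h1⟩
    by_cases h3 : ∃ t ∈ V.Tran, t.1 = p.2.1
    · obtain ⟨t, ht⟩ := h3
      exact ⟨t, fun _ => ht, fun h => absurd h h2, fun h => absurd h h1⟩
    · exact ⟨(p.2.1, 0, p.2.1), fun h => absurd h h3, fun h => absurd h h2, fun h => absurd h h1⟩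
  choose f hf using key
  exact ⟨⟨fun h c => f (h, c), fun h c _ => (hf (h, c)).1, fun h c _ => (hf (h, c)).2.1⟩,
    fun p he => ⟨(hf p).2.1 he, (hf p).2.2⟩⟩

theorem playAux_succ_angel {V : VASS d} {σ : AngelStrategy V} {π : DemonStrategy V}
    {init : V.Config} {n : ℕ} {p : Pos V} (h : playAux σ π init n = some p)
    (ha : V.angelic p.2.1) : playAux σ π init (n + 1) =
      if V.enabled p.2 (σ.choose p.1 p.2) then some (p.next (σ.choose p.1 p.2)) else none := by
  simp [playAux, h, ha, Pos.next]

theorem playAux_succ_demon {V : VASS d} {σ : AngelStrategy V} {π : DemonStrategy V}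
    {init : V.Config} {n : ℕ} {p : Pos V} (h : playAux σ π init n = some p)
    (ha : ¬ V.angelic p.2.1) : playAux σ π init (n + 1) =
      if V.enabled p.2 (π.choose p.1 p.2) then some (p.next (π.choose p.1 p.2)) else none := by
  simp [playAux, h, ha, Pos.next]

theorem playAux_length {V : VASS d} {σ : AngelStrategy V} {π : DemonStrategy V}
    {init : V.Config} {n : ℕ} {p : Pos V} (h : playAux σ π init n = some p) :
    p.1.length = n := by
  induction n generalizing p with
  | zero =>
    simp only [playAux, Option.some.injEq] at h
    simp [← h]
  | succ n ih =>
    simp only [playAux, Option.bind_eq_some_iff] at h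
    obtain ⟨q, hq, h⟩ := h
    split_ifs at h
    all_goals
      simp only [Option.some.injEq] at h
      simp [← h, ih hq]

/-- Demon has a single strategy that reaches `T` from every play that enters the attractor: always
move so that the rank decreases. -/
theorem demon_reaches {V : VASS d} (T : Pos V → Prop) :
    ∃ π : DemonStrategy V, ∀ (σ : AngelStrategy V) (init : V.Config) (k n : ℕ) (p : Pos V),
      playAux σ π init n = some p → Attr T k p →
      ∃ m q, playAux σ π init m = some q ∧ T q := by
  -- A move is preferred if it decreases the rank.
  obtain ⟨π, hπ⟩ := exists_strategy V (fun q => ¬ V.angelic q)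
    (fun p t => ∀ k, Attr T (k + 1) p → ¬ Attr T k p → Attr T k (p.next t))
  refine ⟨π, fun σ init k => ?_⟩
  induction k with
  | zero => exact fun n p hp hk => ⟨n, p, hp, hk⟩
  | succ k ih =>
    intro n p hp hk
    by_cases hk' : Attr T k p
    · exact ih n p hp hk'
    rcases hk with hk | ⟨hd, t, ht, hkt⟩ | ⟨ha, he, hall⟩
    · exact absurd hk hk'
    · obtain ⟨hen, hgood⟩ := hπ p ⟨t, ht⟩
      have hA : Attr T (k + 1) p := Or.inr (Or.inl ⟨hd, t, ht, hkt⟩)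
      -- The rank of `p` is exactly `k + 1`, so `t` itself is a preferred move.
      have hg := hgood ⟨t, ht, fun l hl hl' => by
        have : l = k := by
          rcases lt_trichotomy l k with h | h | h
          · exact absurd (hl.mono h) hk'
          · exact h
          · exact absurd (hA.mono h) hl'
        rw [this]
        exact hkt⟩ k hA hk'
      refine ih (n + 1) _ ?_ hg
      rw [playAux_succ_demon hp hd, if_pos hen]
    · have hen := σ.choose_enabled p.1 p.2 ha he
      refine ih (n + 1) _ ?_ (hall _ hen)
      rw [playAux_succ_angel hp ha, if_pos hen]

/-- Angel can stay outside of the attractor forever. -/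
theorem angel_avoids {V : VASS d} (T : Pos V → Prop) :
    ∃ σ : AngelStrategy V, ∀ (π : DemonStrategy V) (init : V.Config),
      (∀ k, ¬ Attr T k ([], init)) →
      ∀ n p, playAux σ π init n = some p → ∀ k, ¬ Attr T k p := by
  obtain ⟨σ, hσ⟩ := exists_strategy V V.angelic
    (fun p t => ∀ k, ¬ Attr T k (p.next t))
  refine ⟨σ, fun π init h0 n => ?_⟩
  induction n with
  | zero =>
    intro p hp
    simp only [playAux, Option.some.injEq] at hp
    exact hp ▸ h0
  | succ n ih =>
    intro p hp
    obtain ⟨q, hq⟩ : ∃ q, playAux σ π init n = some q := by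
      simp only [playAux, Option.bind_eq_some_iff] at hp
      obtain ⟨q, hq, _⟩ := hp
      exact ⟨q, hq⟩
    have hout := ih q hq
    by_cases ha : V.angelic q.2.1
    · rw [playAux_succ_angel hq ha] at hp
      split_ifs at hp with hen
      obtain rfl := Option.some.inj hp
      refine (hσ q ⟨_, hen⟩).2 ?_
      by_contra! hcon
      -- Finitely many transitions: their ranks have a common bound `K`, so `q` has rank `K + 1`.
      have hex : ∀ t, ∃ k, V.enabled q.2 t → Attr T k (Pos.next q t) := by
        intro t
        by_cases ht : V.enabled q.2 t
        · obtain ⟨k, hk⟩ := hcon t ht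
          exact ⟨k, fun _ => hk⟩
        · exact ⟨0, fun h => absurd h ht⟩
      choose r hr using hex
      exact hout (V.Tran.sup r + 1) (Or.inr (Or.inr ⟨ha, ⟨_, hen⟩,
        fun t ht => (hr t ht).mono (Finset.le_sup ht.1)⟩))
    · rw [playAux_succ_demon hq ha] at hp
      split_ifs at hp with hen
      obtain rfl := Option.some.inj hp
      exact fun k hk => hout (k + 1) (Or.inr (Or.inl ⟨ha, _, hen, hk⟩))

theorem reach_determined {V : VASS d} (T : Pos V → Prop) (init : V.Config) :
    (∃ π : DemonStrategy V, ∀ σ : AngelStrategy V, ∃ n p, playAux σ π init n = some p ∧ T p) ∨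
    (∃ σ : AngelStrategy V, ∀ π : DemonStrategy V, ¬ ∃ n p, playAux σ π init n = some p ∧ T p) := by
  by_cases h : ∃ k, Attr T k ([], init)
  · obtain ⟨k, hk⟩ := h
    obtain ⟨π, hπ⟩ := demon_reaches T
    exact Or.inl ⟨π, fun σ => hπ σ init k 0 _ rfl hk⟩
  · push Not at h
    obtain ⟨σ, hσ⟩ := angel_avoids T
    exact Or.inr ⟨σ, fun π ⟨n, p, hp, hT⟩ => hσ π init h n p hp 0 hT⟩

/-- The minimax equality for every payoff whose conditions `payoff > m` are reachability
conditions. -/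
theorem minimax {V : VASS d} (init : V.Config) (f : AngelStrategy V → DemonStrategy V → ℕ∞)
    (T : ℕ → Pos V → Prop)
    (hf : ∀ (m : ℕ) σ π, (m : ℕ∞) < f σ π ↔ ∃ n p, playAux σ π init n = some p ∧ T m p) :
    (⨆ π, ⨅ σ, f σ π) = ⨅ σ, ⨆ π, f σ π := by
  refine le_antisymm (iSup_iInf_le_iInf_iSup _) (le_of_forall_lt fun x hx => ?_)
  lift x to ℕ using (hx.trans_le le_top).ne
  rcases reach_determined (T x) init with ⟨π, hπ⟩ | ⟨σ, hσ⟩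
  · have h : ((x + 1 : ℕ) : ℕ∞) ≤ ⨅ σ, f σ π := le_iInf fun σ => by
      push_cast
      exact Order.add_one_le_of_lt ((hf x σ π).2 (hπ σ))
    exact (Nat.cast_lt.2 x.lt_succ_self).trans_le (h.trans (le_iSup (fun π => ⨅ σ, f σ π) π))
  · refine absurd hx (not_lt.2 ((iInf_le _ σ).trans (iSup_le fun π => not_lt.1 fun h => ?_)))
    exact hσ π ((hf x σ π).1 h)

/-- For every VASS game `A`, every configuration `pv` and every counter `c`:
`sup_π inf_σ len(Comp^{σ,π}(pv)) = inf_σ sup_π len(Comp^{σ,π}(pv))` and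
`sup_π inf_σ max_c(Comp^{σ,π}(pv)) = inf_σ sup_π max_c(Comp^{σ,π}(pv))`, in `ℕ∞`. -/
theorem vass_game_determinacy {d : ℕ} (V : VASS d) (hT : V.total)
    (init : V.Config) (c : Fin d) :
    ((⨆ π : DemonStrategy V, ⨅ σ : AngelStrategy V, lenComp σ π init) =
      ⨅ σ : AngelStrategy V, ⨆ π : DemonStrategy V, lenComp σ π init) ∧
    ((⨆ π : DemonStrategy V, ⨅ σ : AngelStrategy V, maxCounter σ π init c) =
      ⨅ σ : AngelStrategy V, ⨆ π : DemonStrategy V, maxCounter σ π init c) := by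
  constructor
  · refine minimax init (fun σ π => lenComp σ π init)
      (fun m p => (m : ℕ∞) < (p.1.length : ℕ∞) + 1) fun m σ π => ?_
    simp only [lenComp, lt_iSup_iff, Set.mem_ofPred_eq, Option.isSome_iff_exists]
    constructor
    · rintro ⟨n, ⟨p, hp⟩, hm⟩
      exact ⟨n, p, hp, by rwa [playAux_length hp]⟩
    · rintro ⟨n, p, hp, hm⟩
      exact ⟨n, ⟨p, hp⟩, by rwa [playAux_length hp] at hm⟩
  · refine minimax init (fun σ π => maxCounter σ π init c)
      (fun m p => (m : ℕ∞) < (p.2.2 c : ℕ∞)) fun m σ π => ?_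
    simp only [maxCounter, lt_iSup_iff, Set.mem_ofPred_eq, visits]
    constructor
    · rintro ⟨x, ⟨n, h, hp⟩, hm⟩
      exact ⟨n, (h, x), hp, hm⟩
    · rintro ⟨n, p, hp, hm⟩
      exact ⟨p.2, ⟨n, p.1, hp⟩, hm⟩

end
end VassPaper
end

section
/- Let G = (V, →, c) be a game where V is a countable set of vertices partitioned into demonic vertices V_D and angelic vertices V_A, → ⊆ V × V is a finitely-branching transition relation (every vertex has only finitely many successors), and c : V → ℕ is a cost function; fix an initial vertex v̂ ∈ V. Then sup_π inf_σ mmax[c](α^{σ,π}) = inf_σ sup_π mmax[c](α^{σ,π}), where π ranges over Demon strategies, σ over Angel strategies, and both sides are evaluated in ℕ∞. -/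
/-!
The proof goes through reachability games, one for each threshold `k`. Let `W k` be the set of
vertices from which Demon can force a visit to a vertex of cost at least `k` within a bounded
number of steps, i.e. the union over `n` of the attractor levels `Att G k n`.

* From `v ∈ W k`, Demon forces cost at least `k` by always moving to a successor of least
  attractor level (`exists_demon`).
* From `v ∉ W k`, Angel keeps all costs below `k` by never entering `W k` (`exists_angel`). At an
  angelic vertex outside `W k` a successor outside `W k` exists because the vertex has only
  finitely many successors: were they all in `W k`, they would share a common level.

If `v̂ ∈ W k` for all `k`, the lower value is `⊤`. Otherwise take the least `k` with `v̂ ∉ W k`;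
it is positive since `W 0` is everything, and then `k - 1` lies below the lower value and above
the upper one. The remaining inequality is the general one between `sup inf` and `inf sup`.
-/

open scoped Classical

namespace VassPaperGames

noncomputable section

/-- A game `G = (V, →, c)`: a countable set of vertices partitioned into demonic and angelic
ones (via the predicate `demonic`), a finitely-branching transition relation, and a cost
function. -/
structure CGame where
  V : Type
  [cnt : Countable V]
  demonic : V → Prop
  R : V → V → Prop
  finBranch : ∀ v : V, {u | R v u}.Finite
  cost : V → ℕ

attribute [instance] CGame.cnt

/-- A strategy for the player owning the vertices in `own`: it assigns to every finite path
(represented by its strict past `h` and current vertex `v`) a successor of `v`, whenever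
`v` has at least one successor. -/
structure GStrategy (G : CGame) (own : G.V → Prop) where
  choose : List G.V → G.V → G.V
  choose_succ : ∀ h v, own v → (∃ u, G.R v u) → G.R v (choose h v)

abbrev GAngelStrategy (G : CGame) := GStrategy G (fun v => ¬ G.demonic v)
abbrev GDemonStrategy (G : CGame) := GStrategy G G.demonic

/-- The maximal path `α^{σ,π}` from `init`: `gplayAux σ π init n` is (the history together
with) the `n`-th vertex, or `none` if the path has already ended (in a vertex without
successors). -/
def gplayAux {G : CGame} (σ : GAngelStrategy G) (π : GDemonStrategy G) (init : G.V) :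
    ℕ → Option (List G.V × G.V)
  | 0 => some ([], init)
  | n+1 => (gplayAux σ π init n).bind fun hv =>
      if ∃ u, G.R hv.2 u then
        some (hv.1 ++ [hv.2],
          if G.demonic hv.2 then π.choose hv.1 hv.2 else σ.choose hv.1 hv.2)
      else none

/-- `mmax[c](α^{σ,π})`: the supremum of the costs of the vertices visited by the maximal
path `α^{σ,π}` from `init`. -/
def gmmax {G : CGame} (σ : GAngelStrategy G) (π : GDemonStrategy G) (init : G.V) : ℕ∞ :=
  ⨆ v ∈ {v : G.V | ∃ n h, gplayAux σ π init n = some (h, v)}, ((G.cost v : ℕ) : ℕ∞)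

/-- The Bellman operator `Γ`: `Γ(f)(v) = max{c(v), max/min of f over the successors of v}`
(demonic: max, angelic: min), with `Γ(f)(v) = c(v)` for terminal `v`. -/
def Gamma (G : CGame) (f : G.V → ℕ∞) : G.V → ℕ∞ := fun v =>
  if ∃ u, G.R v u then
    ((G.cost v : ℕ) : ℕ∞) ⊔
      (if G.demonic v then ⨆ u ∈ {u | G.R v u}, f u else ⨅ u ∈ {u | G.R v u}, f u)
  else ((G.cost v : ℕ) : ℕ∞)

/-- A memoryless (positional) strategy: its choice depends only on the current vertex. -/
def GMemoryless {G : CGame} {own : G.V → Prop} (s : GStrategy G own) : Prop :=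
  ∀ h h' v, s.choose h v = s.choose h' v


/-- The `n`-th level of Demon's attractor of `{v | k ≤ cost v}`: the vertices from which Demon can
force a visit to a vertex of cost at least `k` within `n` moves. -/
def Att (G : CGame) (k : ℕ) : ℕ → G.V → Prop
  | 0, v => k ≤ G.cost v
  | n + 1, v => Att G k n v ∨ (G.demonic v ∧ ∃ u, G.R v u ∧ Att G k n u) ∨
      (¬ G.demonic v ∧ (∃ u, G.R v u) ∧ ∀ u, G.R v u → Att G k n u)

theorem Att.mono {G : CGame} {k m n : ℕ} (h : m ≤ n) {v : G.V} (hv : Att G k m v) :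
    Att G k n v := by
  induction h with
  | refl => exact hv
  | step _ ih => exact Or.inl ih

/-- Finite branching gives the successors of `v` a common attractor level. -/
theorem Att.uniform {G : CGame} {k : ℕ} {v : G.V} (h : ∀ u, G.R v u → ∃ n, Att G k n u) :
    ∃ n, ∀ u, G.R v u → Att G k n u := by
  choose f hf using h
  obtain ⟨n, hn⟩ := ((G.finBranch v).dependent_image f).bddAbove
  exact ⟨n, fun u hu => (hf u hu).mono (hn ⟨u, hu, rfl⟩)⟩

theorem cost_le_gmmax {G : CGame} {σ : GAngelStrategy G} {π : GDemonStrategy G} {v₀ v : G.V}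
    {n : ℕ} {h : List G.V} (e : gplayAux σ π v₀ n = some (h, v)) :
    ((G.cost v : ℕ) : ℕ∞) ≤ gmmax σ π v₀ :=
  le_iSup₂ (f := fun (v : G.V) (_ : v ∈ {v : G.V | ∃ n h, gplayAux σ π v₀ n = some (h, v)}) =>
    ((G.cost v : ℕ) : ℕ∞)) v ⟨n, h, e⟩

theorem gplayAux_succ {G : CGame} {σ : GAngelStrategy G} {π : GDemonStrategy G} {v₀ v : G.V}
    {n : ℕ} {h : List G.V} (e : gplayAux σ π v₀ n = some (h, v)) (hs : ∃ u, G.R v u) :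
    gplayAux σ π v₀ (n + 1) =
      some (h ++ [v], if G.demonic v then π.choose h v else σ.choose h v) := by
  simp [gplayAux, e, hs]

/-- Demon's attractor strategy: moving to a successor of least level lowers the level of the
current vertex at every step, so that a vertex of cost at least `k` is reached. -/
theorem exists_demon (G : CGame) (k : ℕ) :
    ∃ π : GDemonStrategy G, ∀ (σ : GAngelStrategy G) (v₀ : G.V) (n : ℕ), Att G k n v₀ →
      (k : ℕ∞) ≤ gmmax σ π v₀ := by
  have key : ∀ v : G.V, ∃ u, (∃ u, G.R v u) →
      G.R v u ∧ ∀ n, (∃ u', G.R v u' ∧ Att G k n u') → Att G k n u := by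
    intro v
    by_cases hA : ∃ n u', G.R v u' ∧ Att G k n u'
    · obtain ⟨u, hu, hAu⟩ := Nat.find_spec hA
      exact ⟨u, fun _ => ⟨hu, fun n hn => hAu.mono (Nat.find_min' hA hn)⟩⟩
    · by_cases hs : ∃ u, G.R v u
      · obtain ⟨u, hu⟩ := hs
        exact ⟨u, fun _ => ⟨hu, fun n hn => (hA ⟨n, hn⟩).elim⟩⟩
      · exact ⟨v, fun h => (hs h).elim⟩
  choose f hf using key
  refine ⟨⟨fun _ v => f v, fun _ v _ hs => (hf v hs).1⟩, fun σ v₀ n hn => ?_⟩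
  set π : GDemonStrategy G := ⟨fun _ v => f v, fun _ v _ hs => (hf v hs).1⟩
  suffices H : ∀ n m h v, gplayAux σ π v₀ m = some (h, v) → Att G k n v →
      (k : ℕ∞) ≤ gmmax σ π v₀ from H n 0 [] v₀ rfl hn
  intro n
  induction n with
  | zero =>
    intro m h v e hv
    exact le_trans (by exact_mod_cast hv) (cost_le_gmmax e)
  | succ n ih =>
    intro m h v e hv
    rcases hv with hv | ⟨hd, u, hu, hAu⟩ | ⟨hd, hs, hall⟩
    · exact ih m h v e hv
    · have e' := gplayAux_succ e ⟨u, hu⟩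
      rw [if_pos hd] at e'
      exact ih _ _ _ e' ((hf v ⟨u, hu⟩).2 n ⟨u, hu, hAu⟩)
    · have e' := gplayAux_succ e hs
      rw [if_neg hd] at e'
      exact ih _ _ _ e' (hall _ (σ.choose_succ h v hd hs))

/-- Angel's trapping strategy: the complement of the attractor is never left, and it contains only
vertices of cost below `k`. -/
theorem exists_angel (G : CGame) (k : ℕ) :
    ∃ σ : GAngelStrategy G, ∀ (π : GDemonStrategy G) (v₀ : G.V), (¬ ∃ n, Att G k n v₀) →
      ∀ n h v, gplayAux σ π v₀ n = some (h, v) → G.cost v < k := by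
  have key : ∀ v : G.V, ∃ u, (∃ u, G.R v u) →
      G.R v u ∧ ((∃ u', G.R v u' ∧ ¬ ∃ n, Att G k n u') → ¬ ∃ n, Att G k n u) := by
    intro v
    by_cases hA : ∃ u', G.R v u' ∧ ¬ ∃ n, Att G k n u'
    · obtain ⟨u, hu, hAu⟩ := hA
      exact ⟨u, fun _ => ⟨hu, fun _ => hAu⟩⟩
    · by_cases hs : ∃ u, G.R v u
      · obtain ⟨u, hu⟩ := hs
        exact ⟨u, fun _ => ⟨hu, fun h => (hA h).elim⟩⟩
      · exact ⟨v, fun h => (hs h).elim⟩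
  choose f hf using key
  refine ⟨⟨fun _ v => f v, fun _ v _ hs => (hf v hs).1⟩, fun π v₀ h₀ => ?_⟩
  set σ : GAngelStrategy G := ⟨fun _ v => f v, fun _ v _ hs => (hf v hs).1⟩
  suffices H : ∀ n h v, gplayAux σ π v₀ n = some (h, v) → ¬ ∃ n, Att G k n v from
    fun n h v e => not_le.1 fun hk => H n h v e ⟨0, hk⟩
  intro n
  induction n with
  | zero =>
    intro h v e
    simp only [gplayAux, Option.some.injEq, Prod.mk.injEq] at e
    exact e.2 ▸ h₀
  | succ n ih =>
    intro h v e
    rcases e₁ : gplayAux σ π v₀ n with _ | ⟨h', w⟩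
    · simp [gplayAux, e₁] at e
    · have hw := ih h' w e₁
      by_cases hs : ∃ u, G.R w u
      · rw [gplayAux_succ e₁ hs, Option.some.injEq, Prod.mk.injEq] at e
        obtain ⟨-, rfl⟩ := e
        split_ifs with hd
        · rintro ⟨m, hm⟩
          exact hw ⟨m + 1, Or.inr (Or.inl ⟨hd, _, π.choose_succ h' w hd hs, hm⟩)⟩
        · refine (hf w hs).2 ?_
          by_contra hc
          push Not at hc
          obtain ⟨m, hm⟩ := Att.uniform hc
          exact hw ⟨m + 1, Or.inr (Or.inr ⟨hd, hs, hm⟩)⟩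
      · simp [gplayAux, e₁, hs] at e

/-- For every game `G = (V, →, c)` with countably many vertices and a
finitely-branching transition relation, and every initial vertex `v̂`:
`sup_π inf_σ mmax[c](α^{σ,π}) = inf_σ sup_π mmax[c](α^{σ,π})` in `ℕ∞`. -/
theorem countable_game_determinacy (G : CGame) (vhat : G.V) :
    (⨆ π : GDemonStrategy G, ⨅ σ : GAngelStrategy G, gmmax σ π vhat) =
      ⨅ σ : GAngelStrategy G, ⨆ π : GDemonStrategy G, gmmax σ π vhat := by
  refine le_antisymm (iSup_iInf_le_iInf_iSup _) ?_
  have lower : ∀ k, (∃ n, Att G k n vhat) →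
      (k : ℕ∞) ≤ ⨆ π : GDemonStrategy G, ⨅ σ : GAngelStrategy G, gmmax σ π vhat := by
    rintro k ⟨n, hn⟩
    obtain ⟨π, hπ⟩ := exists_demon G k
    exact le_iSup_of_le π (le_iInf fun σ => hπ σ vhat n hn)
  by_cases hall : ∀ k, ∃ n, Att G k n vhat
  · exact le_top.trans_eq (ENat.eq_top_iff_forall_ge.2 fun k => lower k (hall k)).symm
  · push Not at hall
    have hk := Nat.find_spec hall
    have hmin := fun m => Nat.find_min (m := m) hall
    generalize Nat.find hall = k at hk hmin
    rcases k with _ | k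
    · exact (hk 0 (Nat.zero_le _)).elim
    · refine le_trans ?_ (lower k (by simpa using hmin k (Nat.lt_succ_self k)))
      obtain ⟨σ, hσ⟩ := exists_angel G (k + 1)
      refine iInf_le_of_le σ (iSup_le fun π => iSup₂_le ?_)
      rintro v ⟨n, h, e⟩
      exact_mod_cast Nat.lt_succ_iff.1 (hσ π vhat (by simpa using hk) n h v e)

end
end VassPaperGames
end
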